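/- arXiv:1804.01614 — 8 statements merged into one kernel-verified Lean document; each statement's English description precedes it below -/
import Mathlib

section
/- Let b_0, …, b_{m−1} be m real numbers (m ≥ 1) placed in a ring and n a real number. If b_0 + b_1 + … + b_{m−1} ≤ n, then for every length l with 1 ≤ l ≤ m there exists an index i ∈ {0, …, m−1} such that the chain sum ‖c_i^l‖ = Σ_{j=0}^{l−1} b_{(i+j) mod m} satisfies ‖c_i^l‖ ≤ l·n/m. -/
/-!
For each fixed offset `j`, the boxes at positions `i + j` run exactly once around the ring as `i`
varies. Hence the `m` chains of length `l` have total sum `l * (b 0 + ⋯ + b (m - 1)) ≤ l * n`, and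
some chain does not exceed their average, which is at most `l * n / m`.
-/

section

variable {M : Type*} [AddCommMonoid M]

theorem sum_range_add_mod (m j : ℕ) (b : ℕ → M) :
    ∑ i ∈ Finset.range m, b ((i + j) % m) = ∑ i ∈ Finset.range m, b i := by
  calc ∑ i ∈ Finset.range m, b ((i + j) % m)
      = ∑ k ∈ Finset.Ico j (j + m), b (k % m) := by
        rw [Finset.sum_Ico_eq_sum_range, Nat.add_sub_cancel_left]
        simp only [Nat.add_comm]
    _ = ∑ i ∈ (Finset.Ico j (j + m)).image (· % m), b i :=
        (Finset.sum_image (Nat.mod_injOn_Ico j m)).symm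
    _ = ∑ i ∈ Finset.range m, b i := by rw [Nat.image_Ico_mod]

theorem sum_sum_range_add_mod (m l : ℕ) (b : ℕ → M) :
    ∑ i ∈ Finset.range m, ∑ j ∈ Finset.range l, b ((i + j) % m) =
      l • ∑ i ∈ Finset.range m, b i := by
  rw [Finset.sum_comm]
  simp only [sum_range_add_mod, Finset.sum_const, Finset.card_range]

theorem pigeonring_basic_general [LinearOrder M] [IsOrderedCancelAddMonoid M] {m : ℕ} (hm : 1 ≤ m)
    (b : ℕ → M) (n : M) (h : ∑ i ∈ Finset.range m, b i ≤ n) (l : ℕ) :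
    ∃ i < m, m • ∑ j ∈ Finset.range l, b ((i + j) % m) ≤ l • n := by
  have nonempty : (Finset.range m).Nonempty :=
    Finset.nonempty_range_iff.mpr (Nat.one_le_iff_ne_zero.mp hm)
  have total_le : ∑ i ∈ Finset.range m, m • ∑ j ∈ Finset.range l, b ((i + j) % m) ≤
      ∑ _i ∈ Finset.range m, l • n := by
    rw [Finset.sum_nsmul, sum_sum_range_add_mod, Finset.sum_const, Finset.card_range]
    gcongr
  obtain ⟨i, hi, hle⟩ := Finset.exists_le_of_sum_le nonempty total_le
  exact ⟨i, Finset.mem_range.mp hi, hle⟩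

end

/-- Pigeonring principle (basic form): if the sum of `m` real numbers placed in a ring is at
most `n`, then for every length `l ∈ [1, m]` there are `l` consecutive boxes whose sum is at
most `l * n / m`. -/
theorem pigeonring_basic (m : ℕ) (hm : 1 ≤ m) (b : ℕ → ℝ) (n : ℝ)
    (h : ∑ i ∈ Finset.range m, b i ≤ n) :
    ∀ l, 1 ≤ l → l ≤ m →
      ∃ i < m, ∑ j ∈ Finset.range l, b ((i + j) % m) ≤ (l : ℝ) * n / m := by
  intro l _ _
  simpa only [le_div_iff₀' (Nat.cast_pos.mpr hm : (0 : ℝ) < m), nsmul_eq_mul] using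
    pigeonring_basic_general hm b n h l
end

section
/- Let b_0, …, b_{m−1} be m real numbers (m ≥ 1) placed in a ring and n a real number. If b_0 + b_1 + … + b_{m−1} ≤ n, then there exists an index i ∈ {0, …, m−1} such that for every l with 1 ≤ l ≤ m, the chain sum ‖c_i^l‖ = Σ_{j=0}^{l−1} b_{(i+j) mod m} satisfies ‖c_i^l‖ ≤ l·n/m; i.e., the chain c_i^m starting at b_i is prefix-viable. -/
/-!
Subtracting `n / m` from every box makes the total nonpositive, so the partial sums `S k` of the
resulting periodic sequence satisfy `S (k + m) ≤ S k` and attain their maximum over `ℕ` at some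
`i < m`. The chain of length `l` starting at `i` then sums to `S (i + l) - S i ≤ 0`.
-/

theorem apply_le_apply_mod_of_apply_add_le {α : Type*} [Preorder α] {f : ℕ → α} {m : ℕ}
    (hf : ∀ k, f (k + m) ≤ f k) (k : ℕ) : f k ≤ f (k % m) := by
  have anti : Antitone fun q ↦ f (k % m + m * q) :=
    antitone_nat_of_succ_le fun q ↦ by simpa only [mul_add_one, add_assoc] using hf (k % m + m * q)
  simpa only [Nat.mod_add_div, mul_zero, add_zero] using anti (Nat.zero_le (k / m))

theorem exists_lt_forall_apply_le_of_apply_add_le {α : Type*} [LinearOrder α] {f : ℕ → α} {m : ℕ}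
    (hm : 0 < m) (hf : ∀ k, f (k + m) ≤ f k) : ∃ i < m, ∀ k, f k ≤ f i := by
  obtain ⟨i, hi, hmax⟩ :=
    (Finset.range m).exists_max_image f (Finset.nonempty_range_iff.mpr hm.ne')
  exact ⟨i, Finset.mem_range.mp hi, fun k ↦ (apply_le_apply_mod_of_apply_add_le hf k).trans
    (hmax _ (Finset.mem_range.mpr (Nat.mod_lt k hm)))⟩

theorem sum_range_add_of_periodic {M : Type*} [AddCommMonoid M] {c : ℕ → M} {m : ℕ}
    (hc : Function.Periodic c m) (k : ℕ) :
    ∑ j ∈ Finset.range (k + m), c j = ∑ j ∈ Finset.range k, c j + ∑ j ∈ Finset.range m, c j := by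
  have shift (j : ℕ) : c (m + j) = c j := by rw [add_comm, hc]
  rw [add_comm k, Finset.sum_range_add, add_comm]
  simp only [shift]

section OrderedGroup

variable {G : Type*} [AddCommGroup G] [LinearOrder G] [IsOrderedAddMonoid G] {m : ℕ}

theorem exists_lt_forall_sum_range_nonpos_of_periodic (hm : 0 < m) {c : ℕ → G}
    (hc : Function.Periodic c m) (hsum : ∑ j ∈ Finset.range m, c j ≤ 0) :
    ∃ i < m, ∀ l, ∑ j ∈ Finset.range l, c (i + j) ≤ 0 := by
  let S (k : ℕ) : G := ∑ j ∈ Finset.range k, c j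
  have S_add_le (k : ℕ) : S (k + m) ≤ S k :=
    (sum_range_add_of_periodic hc k).trans_le (add_le_of_nonpos_right hsum)
  obtain ⟨i, hi, hmax⟩ := exists_lt_forall_apply_le_of_apply_add_le hm S_add_le
  refine ⟨i, hi, fun l ↦ ?_⟩
  have S_split : S (i + l) = S i + ∑ j ∈ Finset.range l, c (i + j) := Finset.sum_range_add c i l
  exact (add_le_iff_nonpos_right (S i)).mp (S_split ▸ hmax (i + l))

theorem pigeonring_strong_general (hm : 0 < m) (b : ℕ → G) (a : G)
    (h : ∑ i ∈ Finset.range m, b i ≤ m • a) :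
    ∃ i < m, ∀ l, ∑ j ∈ Finset.range l, b ((i + j) % m) ≤ l • a := by
  let c (j : ℕ) : G := b (j % m) - a
  have c_periodic : Function.Periodic c m := fun j ↦ by simp only [c, Nat.add_mod_right]
  have c_sum_nonpos : ∑ j ∈ Finset.range m, c j ≤ 0 := by
    have sum_mod : ∑ j ∈ Finset.range m, b (j % m) = ∑ j ∈ Finset.range m, b j :=
      Finset.sum_congr rfl fun j hj ↦ by rw [Nat.mod_eq_of_lt (Finset.mem_range.mp hj)]
    rwa [Finset.sum_sub_distrib, Finset.sum_const, Finset.card_range, sum_mod, sub_nonpos]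
  obtain ⟨i, hi, hchain⟩ := exists_lt_forall_sum_range_nonpos_of_periodic hm c_periodic c_sum_nonpos
  refine ⟨i, hi, fun l ↦ ?_⟩
  simpa only [c, Finset.sum_sub_distrib, Finset.sum_const, Finset.card_range, sub_nonpos]
    using hchain l

end OrderedGroup

/-- Pigeonring principle (strong form): if the sum of `m` real numbers placed in a ring is at
most `n`, then there exists a starting index `i` such that for every length `l ∈ [1, m]`, the
chain of `l` consecutive boxes starting at `i` has sum at most `l * n / m`. -/
theorem pigeonring_strong (m : ℕ) (hm : 1 ≤ m) (b : ℕ → ℝ) (n : ℝ)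
    (h : ∑ i ∈ Finset.range m, b i ≤ n) :
    ∃ i < m, ∀ l, 1 ≤ l → l ≤ m →
      ∑ j ∈ Finset.range l, b ((i + j) % m) ≤ (l : ℝ) * n / m := by
  have hn : m • (n / m) = n := by rw [nsmul_eq_mul, mul_div_cancel₀ n (by positivity)]
  obtain ⟨i, hi, hchain⟩ := pigeonring_strong_general hm b (n / m) (hn.symm ▸ h)
  exact ⟨i, hi, fun l _ _ ↦ by simpa only [nsmul_eq_mul, mul_div_assoc] using hchain l⟩
end

section
/- Let B = (b_0, …, b_{m−1}) and T = (t_0, …, t_{m−1}) be two sequences of m real numbers (m ≥ 1) placed in a ring, and n a real number. If b_0 + … + b_{m−1} ≥ n and t_0 + … + t_{m−1} = n, then for every l with 1 ≤ l ≤ m there exists an index i ∈ {0, …, m−1} such that for every l' with 1 ≤ l' ≤ l, the prefix chain sum satisfies Σ_{j=0}^{l'−1} b_{(i+j) mod m} ≥ Σ_{j=0}^{l'−1} t_{(i+j) mod m}. -/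
/-!
Let `S k` be the sum of `b - t` over the first `k` boxes of the ring, unrolled periodically. Going
once more around the ring adds `∑ b - ∑ t ≥ 0`, so a minimum of `S` over the first turn is a minimum
over all `k`. Start the chains at a minimizer `i`: the prefix of length `l` has excess
`S (i + l) - S i ≥ 0`.
-/

open Finset Function

lemma sum_range_period_add {M : Type*} [AddCommMonoid M] {f : ℕ → M} {m : ℕ}
    (hf : Periodic f m) (k : ℕ) :
    ∑ j ∈ range (m + k), f j = ∑ j ∈ range m, f j + ∑ j ∈ range k, f j := by
  rw [sum_range_add]
  simp only [add_comm m, hf _]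

lemma exists_forall_sum_range_le_of_periodic {M : Type*} [AddCommMonoid M] [LinearOrder M]
    [IsOrderedAddMonoid M] {f : ℕ → M} {m : ℕ} (hm : 0 < m) (hf : Periodic f m)
    (hsum : 0 ≤ ∑ j ∈ range m, f j) :
    ∃ i < m, ∀ k, ∑ j ∈ range i, f j ≤ ∑ j ∈ range k, f j := by
  obtain ⟨i, hi, hmin⟩ := exists_min_image (range m) (fun k ↦ ∑ j ∈ range k, f j)
    ⟨0, mem_range.2 hm⟩
  refine ⟨i, mem_range.1 hi, fun k ↦ ?_⟩
  induction k using Nat.strong_induction_on with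
  | h k ih =>
    obtain hk | hk := lt_or_ge k m
    · exact hmin k (mem_range.2 hk)
    · obtain ⟨k, rfl⟩ := Nat.exists_eq_add_of_le hk
      calc ∑ j ∈ range i, f j
        _ ≤ ∑ j ∈ range k, f j := ih k (by lia)
        _ ≤ ∑ j ∈ range m, f j + ∑ j ∈ range k, f j := le_add_of_nonneg_left hsum
        _ = ∑ j ∈ range (m + k), f j := (sum_range_period_add hf k).symm

lemma exists_forall_sum_range_add_nonneg_of_periodic {M : Type*} [AddCommMonoid M]
    [LinearOrder M] [IsOrderedCancelAddMonoid M] {f : ℕ → M} {m : ℕ} (hm : 0 < m)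
    (hf : Periodic f m) (hsum : 0 ≤ ∑ j ∈ range m, f j) :
    ∃ i < m, ∀ l, 0 ≤ ∑ j ∈ range l, f (i + j) := by
  obtain ⟨i, hi, hmin⟩ := exists_forall_sum_range_le_of_periodic hm hf hsum
  refine ⟨i, hi, fun l ↦ ?_⟩
  have hle := hmin (i + l)
  rwa [sum_range_add, le_add_iff_nonneg_right] at hle

theorem pigeonring_variable_threshold_ge_general {G : Type*} [AddCommGroup G] [LinearOrder G]
    [IsOrderedAddMonoid G] {m : ℕ} (hm : 0 < m) (b t : ℕ → G)
    (hsum : ∑ i ∈ range m, t i ≤ ∑ i ∈ range m, b i) :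
    ∃ i < m, ∀ l,
      ∑ j ∈ range l, t ((i + j) % m) ≤ ∑ j ∈ range l, b ((i + j) % m) := by
  have hperiodic : Periodic (fun j ↦ b (j % m) - t (j % m)) m :=
    (Nat.periodic_mod m).comp fun j ↦ b j - t j
  have hturn : ∑ j ∈ range m, (b (j % m) - t (j % m)) = ∑ j ∈ range m, (b j - t j) :=
    sum_congr rfl fun j hj ↦ by rw [Nat.mod_eq_of_lt (mem_range.1 hj)]
  have hexcess : 0 ≤ ∑ j ∈ range m, (b (j % m) - t (j % m)) := by
    rwa [hturn, sum_sub_distrib, sub_nonneg]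
  obtain ⟨i, hi, hchain⟩ :=
    exists_forall_sum_range_add_nonneg_of_periodic hm hperiodic hexcess
  refine ⟨i, hi, fun l ↦ ?_⟩
  simpa only [sum_sub_distrib, sub_nonneg] using hchain l

/-- Pigeonring principle with variable threshold allocation ('≥' version): if `∑ B ≥ n` and
`∑ T = n`, then for every `l ∈ [1, m]` there is a chain of length `l` all of whose prefixes
satisfy the variable-threshold lower bound. -/
theorem pigeonring_variable_threshold_ge (m : ℕ) (hm : 1 ≤ m) (b t : ℕ → ℝ) (n : ℝ)
    (hb : n ≤ ∑ i ∈ Finset.range m, b i)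
    (ht : ∑ i ∈ Finset.range m, t i = n) :
    ∀ l, 1 ≤ l → l ≤ m →
      ∃ i < m, ∀ l', 1 ≤ l' → l' ≤ l →
        ∑ j ∈ Finset.range l', t ((i + j) % m) ≤ ∑ j ∈ Finset.range l', b ((i + j) % m) := by
  intro l _ _
  obtain ⟨i, hi, hchain⟩ := pigeonring_variable_threshold_ge_general hm b t (ht.trans_le hb)
  exact ⟨i, hi, fun l' _ _ ↦ hchain l'⟩
end

section
/- Let B = (b_0, …, b_{m−1}) and T = (t_0, …, t_{m−1}) be two sequences of m integers (m ≥ 1) placed in a ring, and n an integer. If b_0 + … + b_{m−1} ≤ n and t_0 + … + t_{m−1} = n − m + 1, then for every l with 1 ≤ l ≤ m there exists an index i ∈ {0, …, m−1} such that for every l' with 1 ≤ l' ≤ l, the prefix chain sum satisfies Σ_{j=0}^{l'−1} b_{(i+j) mod m} ≤ (l' − 1) + Σ_{j=0}^{l'−1} t_{(i+j) mod m}. -/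
/-! Replacing `t` by `t + 1` turns the integer bound `∑ b ≤ (l - 1) + ∑ t` into the strict bound
`∑ b < ∑ t`, so only the strict principle has to be proved. There, the partial sums `P` of the
periodic sequence `b - t` satisfy `P (k + m) < P k`. Start the chain at the last index `i < m` at
which `P` is maximal on one period: every later partial sum is smaller than `P i`, which says that
every chain starting at `i` has negative sum. -/

theorem exists_lt_forall_gt_lt_of_forall_add_lt {α : Type*} [LinearOrder α] {P : ℕ → α} {m : ℕ}
    (hP : ∀ k, P (k + m) < P k) : ∃ i < m, ∀ j > i, P j < P i := by
  have hm : 0 < m := Nat.pos_of_ne_zero fun h => (h ▸ hP 0).false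
  have lt_sub_period {j : ℕ} (hj : m ≤ j) : P j < P (j - m) := by
    simpa only [Nat.sub_add_cancel hj] using hP (j - m)
  -- The lexicographic order breaks ties between maxima in favour of the last one.
  obtain ⟨i, hi, hmax⟩ := Finset.exists_max_image (Finset.range m) (fun k => toLex (P k, k))
    ⟨0, Finset.mem_range.mpr hm⟩
  simp only [Finset.mem_range, Prod.Lex.toLex_le_toLex] at hi hmax
  have le_max (j : ℕ) : P j ≤ P i := by
    induction j using Nat.strong_induction_on with
    | h j ih =>
      obtain hj | hj := lt_or_ge j m
      · exact (hmax j hj).elim le_of_lt fun h => h.1.le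
      · exact (lt_sub_period hj).le.trans (ih (j - m) (Nat.sub_lt_self hm hj))
  refine ⟨i, hi, fun j hij => ?_⟩
  obtain hj | hj := lt_or_ge j m
  · exact (hmax j hj).resolve_right fun h => hij.not_ge h.2
  · exact (lt_sub_period hj).trans_le (le_max (j - m))

theorem sum_range_add_period {α : Type*} [AddCommMonoid α] {f : ℕ → α} {m : ℕ}
    (hf : Function.Periodic f m) (k : ℕ) :
    ∑ j ∈ Finset.range (k + m), f j = ∑ j ∈ Finset.range k, f j + ∑ j ∈ Finset.range m, f j := by
  rw [add_comm k m, Finset.sum_range_add, add_comm]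
  simp only [add_comm m, hf _]

theorem exists_lt_forall_sum_range_neg_of_periodic {α : Type*} [AddCommMonoid α] [LinearOrder α]
    [IsOrderedCancelAddMonoid α] {f : ℕ → α} {m : ℕ} (hf : Function.Periodic f m)
    (hsum : ∑ j ∈ Finset.range m, f j < 0) :
    ∃ i < m, ∀ l, 1 ≤ l → ∑ j ∈ Finset.range l, f (i + j) < 0 := by
  have hdecr (k : ℕ) : ∑ j ∈ Finset.range (k + m), f j < ∑ j ∈ Finset.range k, f j := by
    rw [sum_range_add_period hf]
    exact add_lt_of_neg_right _ hsum
  obtain ⟨i, hi, hlast⟩ := exists_lt_forall_gt_lt_of_forall_add_lt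
    (P := fun k => ∑ j ∈ Finset.range k, f j) hdecr
  refine ⟨i, hi, fun l hl => ?_⟩
  have hlt := hlast (i + l) (Nat.lt_add_of_pos_right hl)
  rwa [Finset.sum_range_add, add_lt_iff_neg_left] at hlt

theorem pigeonring_strict {α : Type*} [AddCommGroup α] [LinearOrder α] [IsOrderedAddMonoid α]
    {m : ℕ} {b t : ℕ → α} (hbt : ∑ i ∈ Finset.range m, b i < ∑ i ∈ Finset.range m, t i) :
    ∃ i < m, ∀ l, 1 ≤ l →
      ∑ j ∈ Finset.range l, b ((i + j) % m) < ∑ j ∈ Finset.range l, t ((i + j) % m) := by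
  have hper : Function.Periodic (fun k => b (k % m) - t (k % m)) m := fun k => by
    simp only [Nat.add_mod_right]
  have hsum : ∑ k ∈ Finset.range m, (b (k % m) - t (k % m)) < 0 := by
    rw [← sub_neg, ← Finset.sum_sub_distrib] at hbt
    refine (Finset.sum_congr rfl fun k hk => ?_).trans_lt hbt
    rw [Nat.mod_eq_of_lt (Finset.mem_range.mp hk)]
  obtain ⟨i, hi, hneg⟩ := exists_lt_forall_sum_range_neg_of_periodic hper hsum
  refine ⟨i, hi, fun l hl => ?_⟩
  rw [← sub_neg, ← Finset.sum_sub_distrib]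
  exact hneg l hl

theorem pigeonring_integer_reduction_general {m : ℕ} {b t : ℕ → ℤ}
    (hbt : ∑ i ∈ Finset.range m, b i < ∑ i ∈ Finset.range m, t i + m) :
    ∃ i < m, ∀ l, 1 ≤ l →
      ∑ j ∈ Finset.range l, b ((i + j) % m) ≤
        ((l : ℤ) - 1) + ∑ j ∈ Finset.range l, t ((i + j) % m) := by
  have sum_add_one (s : ℕ → ℤ) (l : ℕ) :
      ∑ j ∈ Finset.range l, (s j + 1) = ∑ j ∈ Finset.range l, s j + l := by
    simp [Finset.sum_add_distrib]
  obtain ⟨i, hi, hlt⟩ := pigeonring_strict (hbt.trans_eq (sum_add_one t m).symm)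
  refine ⟨i, hi, fun l hl => ?_⟩
  have hltl := hlt l hl
  rw [sum_add_one fun j => t ((i + j) % m)] at hltl
  linarith [Int.add_one_le_of_lt hltl]

/-- Pigeonring principle with integer reduction: if `∑ B ≤ n` and `∑ T = n - m + 1` for
integer sequences, then for every `l ∈ [1, m]` there is a chain of length `l` each of whose
prefixes `c_i^{l'}` satisfies `‖c_i^{l'}‖ ≤ (l' - 1) + ∑ t`. -/
theorem pigeonring_integer_reduction (m : ℕ) (hm : 1 ≤ m) (b t : ℕ → ℤ) (n : ℤ)
    (hb : ∑ i ∈ Finset.range m, b i ≤ n)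
    (ht : ∑ i ∈ Finset.range m, t i = n - m + 1) :
    ∀ l, 1 ≤ l → l ≤ m →
      ∃ i < m, ∀ l', 1 ≤ l' → l' ≤ l →
        ∑ j ∈ Finset.range l', b ((i + j) % m) ≤
          ((l' : ℤ) - 1) + ∑ j ∈ Finset.range l', t ((i + j) % m) := by
  intro l _ _
  obtain ⟨i, hi, hle⟩ := pigeonring_integer_reduction_general (m := m) (b := b) (t := t) (by omega)
  exact ⟨i, hi, fun l' hl' _ => hle l' hl'⟩
end

section
/- Let B = (b_0, …, b_{m−1}) and T = (t_0, …, t_{m−1}) be two sequences of m integers (m ≥ 1) placed in a ring, and n an integer. If b_0 + … + b_{m−1} ≥ n and t_0 + … + t_{m−1} = n + m − 1, then for every l with 1 ≤ l ≤ m there exists an index i ∈ {0, …, m−1} such that for every l' with 1 ≤ l' ≤ l, the prefix chain sum satisfies Σ_{j=0}^{l'−1} b_{(i+j) mod m} ≥ (1 − l') + Σ_{j=0}^{l'−1} t_{(i+j) mod m}. -/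
/-!
Integrality turns the claim into a strict inequality between the chain sums of `b` and of `t - 1`,
so it is enough that the `m`-periodic sequence `f = b - t + 1`, whose sum over a period is positive,
has a starting point `i` from which every nonempty chain has positive sum. With the partial sums
`S k = f 0 + ⋯ + f (k - 1)` this reads `S i < S k` for all `k > i`. Since `S` increases strictly
along every step of length `m`, its minimum over one period is its minimum over `ℕ`, and the last
index of the period attaining it can be taken as `i`.
-/

open Finset Function

theorem exists_lt_forall_gt_lt_of_lt_add {α : Type*} [LinearOrder α] {S : ℕ → α} {m : ℕ}
    (hm : 0 < m) (hS : ∀ k, S k < S (k + m)) : ∃ i < m, ∀ k, i < k → S i < S k := by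
  -- In the lexicographic order, the minimum is the last of the minimizers of `S`.
  obtain ⟨i, hi, hlex⟩ := exists_min_image (range m)
    (fun k ↦ toLex (S k, OrderDual.toDual k)) ⟨0, mem_range.2 hm⟩
  have lt_or_eq_of_lt (k : ℕ) (hk : k < m) : S i < S k ∨ S i = S k ∧ k ≤ i := by
    simpa only [Prod.Lex.toLex_le_toLex, OrderDual.toDual_le_toDual] using hlex k (mem_range.2 hk)
  have S_le (k : ℕ) : S i ≤ S k := by
    induction k using Nat.strong_induction_on with
    | _ k ih =>
      rcases lt_or_ge k m with hk | hk
      · exact (lt_or_eq_of_lt k hk).elim le_of_lt fun h ↦ h.1.le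
      · obtain ⟨r, rfl⟩ := Nat.exists_eq_add_of_le' hk
        exact (ih r (Nat.lt_add_of_pos_right hm)).trans (hS r).le
  refine ⟨i, mem_range.1 hi, fun k hik ↦ ?_⟩
  rcases lt_or_ge k m with hk | hk
  · exact (lt_or_eq_of_lt k hk).resolve_right fun h ↦ h.2.not_gt hik
  · obtain ⟨r, rfl⟩ := Nat.exists_eq_add_of_le' hk
    exact (S_le r).trans_lt (hS r)

theorem exists_forall_sum_range_pos_of_periodic {M : Type*} [AddCommMonoid M] [LinearOrder M]
    [IsOrderedCancelAddMonoid M] {f : ℕ → M} {m : ℕ} (hf : Periodic f m)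
    (hpos : 0 < ∑ j ∈ range m, f j) :
    ∃ i < m, ∀ k, 0 < k → 0 < ∑ j ∈ range k, f (i + j) := by
  have hm : 0 < m := Nat.pos_of_ne_zero fun h ↦ by simp [h] at hpos
  have sum_lt_sum_add_period (k : ℕ) : ∑ j ∈ range k, f j < ∑ j ∈ range (k + m), f j := by
    have sum_add_period : ∑ j ∈ range (k + m), f j =
        ∑ j ∈ range m, f j + ∑ j ∈ range k, f j := by
      rw [add_comm k m, sum_range_add]
      exact congrArg _ (sum_congr rfl fun j _ ↦ by rw [add_comm, hf])
    rw [sum_add_period]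
    exact lt_add_of_pos_left _ hpos
  obtain ⟨i, hi, hlt⟩ := exists_lt_forall_gt_lt_of_lt_add hm sum_lt_sum_add_period
  refine ⟨i, hi, fun k hk ↦ ?_⟩
  have := hlt (i + k) (Nat.lt_add_of_pos_right hk)
  rwa [sum_range_add, lt_add_iff_pos_right] at this

theorem exists_forall_sum_range_mod_lt {G : Type*} [AddCommGroup G] [LinearOrder G]
    [IsOrderedAddMonoid G] {m : ℕ} {b t : ℕ → G}
    (h : ∑ j ∈ range m, t j < ∑ j ∈ range m, b j) :
    ∃ i < m, ∀ k, 0 < k →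
      ∑ j ∈ range k, t ((i + j) % m) < ∑ j ∈ range k, b ((i + j) % m) := by
  have sum_mod (f : ℕ → G) : ∑ j ∈ range m, f (j % m) = ∑ j ∈ range m, f j :=
    sum_congr rfl fun j hj ↦ by rw [Nat.mod_eq_of_lt (mem_range.1 hj)]
  have periodic : Periodic (fun k ↦ b (k % m) - t (k % m)) m :=
    (Nat.periodic_mod m).comp fun r ↦ b r - t r
  simpa only [sum_sub_distrib, sub_pos] using
    exists_forall_sum_range_pos_of_periodic periodic
      (by simpa only [sum_sub_distrib, sub_pos, sum_mod] using h)

theorem pigeonring_integer_reduction_ge_general {m : ℕ} {b t : ℕ → ℤ}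
    (h : ∑ j ∈ range m, t j < ∑ j ∈ range m, b j + m) :
    ∃ i < m, ∀ k : ℕ, 1 ≤ k →
      (1 - (k : ℤ)) + ∑ j ∈ range k, t ((i + j) % m) ≤ ∑ j ∈ range k, b ((i + j) % m) := by
  have sum_sub_one (k : ℕ) (f : ℕ → ℤ) : ∑ j ∈ range k, (f j - 1) = ∑ j ∈ range k, f j - k := by
    simp
  obtain ⟨i, hi, hlt⟩ := exists_forall_sum_range_mod_lt (m := m) (b := b) (t := fun j ↦ t j - 1)
    (by rw [sum_sub_one]; linarith)
  refine ⟨i, hi, fun k hk ↦ ?_⟩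
  have := hlt k hk
  rw [sum_sub_one k fun j ↦ t ((i + j) % m)] at this
  linarith

/-- Pigeonring principle with integer reduction ('≥' version): if `∑ B ≥ n` and
`∑ T = n + m - 1` for integer sequences, then for every `l ∈ [1, m]` there is a chain of
length `l` each of whose prefixes `c_i^{l'}` satisfies `‖c_i^{l'}‖ ≥ (1 - l') + ∑ t`. -/
theorem pigeonring_integer_reduction_ge (m : ℕ) (hm : 1 ≤ m) (b t : ℕ → ℤ) (n : ℤ)
    (hb : n ≤ ∑ i ∈ Finset.range m, b i)
    (ht : ∑ i ∈ Finset.range m, t i = n + m - 1) :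
    ∀ l, 1 ≤ l → l ≤ m →
      ∃ i < m, ∀ l', 1 ≤ l' → l' ≤ l →
        (1 - (l' : ℤ)) + ∑ j ∈ Finset.range l', t ((i + j) % m) ≤
          ∑ j ∈ Finset.range l', b ((i + j) % m) := by
  obtain ⟨i, hi, hle⟩ := pigeonring_integer_reduction_ge_general (m := m) (b := b) (t := t) (by lia)
  exact fun l _ _ ↦ ⟨i, hi, fun k hk _ ↦ hle k hk⟩
end

section
/- A filtering instance is tight if and only if the following two conditions hold: (1) for all x, q ∈ O, S(x,q) ≤ D(f(x,q)); and (2) there do not exist x₁, q₁, x₂, q₂ ∈ O such that f(x₁,q₁) < f(x₂,q₂) and D(f(x₁,q₁)) ≥ S(x₂,q₂). -/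
/-!
When `f i < f j`, conditions (1) and (2) give `D (f i) < S j ≤ D (f j)`. Hence `D` is strictly
increasing on the range of `f`, even though `D` is arbitrary, and `f i ≤ f j` implies
`S i ≤ D (f i) ≤ D (f j)`.
-/

section

variable {ι α β : Type*}

/-- Tightness of the filtering instance with selection function `f`, box sum `S` and bounding
function `D`: at every threshold in the range of `f`, the filter `S i ≤ D τ` selects exactly the
`i` with `f i ≤ τ`. The index `i` stands for the pair `(x, q)` of objects. -/
def IsTightFiltering [LE α] [LE β] (f : ι → α) (S : ι → β) (D : α → β) : Prop :=
  ∀ i, ∀ τ ∈ Set.range f, f i ≤ τ ↔ S i ≤ D τ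

variable {f : ι → α} {S : ι → β} {D : α → β}

namespace IsTightFiltering

theorem le_bound [Preorder α] [LE β] (h : IsTightFiltering f S D) (i : ι) : S i ≤ D (f i) :=
  (h i (f i) (Set.mem_range_self i)).1 le_rfl

theorem bound_lt [Preorder α] [LinearOrder β] (h : IsTightFiltering f S D) {i j : ι}
    (hij : f i < f j) : D (f i) < S j :=
  lt_of_not_ge fun hS => hij.not_ge ((h j (f i) (Set.mem_range_self i)).2 hS)

end IsTightFiltering

theorem strictMonoOn_range_of_le_of_lt [Preorder α] [Preorder β]
    (hle : ∀ i, S i ≤ D (f i)) (hlt : ∀ i j, f i < f j → D (f i) < S j) :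
    StrictMonoOn D (Set.range f) := by
  rintro _ ⟨i, rfl⟩ _ ⟨j, rfl⟩ hij
  exact (hlt i j hij).trans_le (hle j)

theorem isTightFiltering_of_le_of_lt [LinearOrder α] [Preorder β]
    (hle : ∀ i, S i ≤ D (f i)) (hlt : ∀ i j, f i < f j → D (f i) < S j) :
    IsTightFiltering f S D := by
  have hD : MonotoneOn D (Set.range f) := (strictMonoOn_range_of_le_of_lt hle hlt).monotoneOn
  rintro i _ ⟨j, rfl⟩
  constructor
  · intro hij
    exact (hle i).trans (hD (Set.mem_range_self i) (Set.mem_range_self j) hij)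
  · intro hS
    exact le_of_not_gt fun hji => (hlt j i hji).not_ge hS

variable (f S D) in
theorem filtering_tight_iff_general [LinearOrder α] [LinearOrder β] :
    IsTightFiltering f S D ↔
      (∀ i, S i ≤ D (f i)) ∧ ¬ ∃ i j, f i < f j ∧ S j ≤ D (f i) := by
  simp only [not_exists, not_and, not_le]
  exact ⟨fun h => ⟨h.le_bound, fun _ _ => h.bound_lt⟩,
    fun ⟨hle, hlt⟩ => isTightFiltering_of_le_of_lt hle hlt⟩

end

/-- Tightness characterization of a filtering instance: it is tight (for every threshold `τ`
in the range of `f`, `f x q ≤ τ` iff `S x q ≤ D τ`) iff (1) `S x q ≤ D (f x q)` for all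
`x, q`, and (2) there are no `x₁ q₁ x₂ q₂` with `f x₁ q₁ < f x₂ q₂` and
`D (f x₁ q₁) ≥ S x₂ q₂`. -/
theorem filtering_tight_iff {O : Type*} [Nonempty O]
    (f S : O → O → ℝ) (D : ℝ → ℝ) :
    (∀ x q : O, ∀ τ : ℝ, (∃ a b : O, f a b = τ) → (f x q ≤ τ ↔ S x q ≤ D τ)) ↔
      ((∀ x q : O, S x q ≤ D (f x q)) ∧
        ¬ ∃ x₁ q₁ x₂ q₂ : O, f x₁ q₁ < f x₂ q₂ ∧ D (f x₁ q₁) ≥ S x₂ q₂) := by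
  simpa only [IsTightFiltering, Set.mem_range, Prod.forall, Prod.exists,
    Function.uncurry_apply_pair] using
    filtering_tight_iff_general (Function.uncurry f) (Function.uncurry S) D
end

section
/- Let b_0, …, b_{m−1} be m real numbers (m ≥ 1) placed in a ring, n a real number, i an index, and l' with 1 ≤ l' ≤ m. Suppose the chain c_i^{l'} fails the prefix-viable check exactly at length l': for every k with 1 ≤ k ≤ l'−1, Σ_{j=0}^{k−1} b_{(i+j) mod m} ≤ k·n/m, but Σ_{j=0}^{l'−1} b_{(i+j) mod m} > l'·n/m. Then for every s with 1 ≤ s ≤ l'−1, the chain of length l'−s starting at position i+s is not viable: Σ_{j=0}^{l'−s−1} b_{(i+s+j) mod m} > (l'−s)·n/m; consequently no chain starting from any position in {i, i+1, …, i+l'−1} of length at least reaching position i+l'−1 is prefix-viable. -/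
/-! If the chain at `i + s` ending where the failing chain ends were viable, then appending it to
the viable prefix of length `s` would make the failing chain viable, since thresholds of adjacent
chains add up to at most the threshold of their concatenation. A prefix-viable chain starting at
`i + s` and reaching that end would have this forbidden suffix among its prefixes. -/

section Chains

variable {M : Type*} [AddCommMonoid M] [Preorder M]

/-- The chain of length `l` starting at box `i` is viable: its sum is at most the threshold `T i l`.
Boxes form an infinite sequence `x`; a ring of `m` boxes `b` is the sequence `j ↦ b (j % m)`. -/
def ChainViable (x : ℕ → M) (T : ℕ → ℕ → M) (i l : ℕ) : Prop :=
  ∑ j ∈ Finset.range l, x (i + j) ≤ T i l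

/-- The chain of length `l` starting at box `i` is prefix-viable: all its nonempty prefixes,
including the chain itself, are viable. -/
def PrefixViable (x : ℕ → M) (T : ℕ → ℕ → M) (i l : ℕ) : Prop :=
  ∀ k, 1 ≤ k → k ≤ l → ChainViable x T i k

/-- Superadditivity of a threshold under concatenation of chains, where `T i l` is the threshold
for the chain of length `l` starting at `i`. It is what makes concatenation preserve viability. -/
def SuperadditiveThreshold (T : ℕ → ℕ → M) : Prop :=
  ∀ i k l, T i k + T (i + k) l ≤ T i (k + l)

theorem superadditiveThreshold_mul_div {K : Type*} [DivisionSemiring K] [Preorder K] (a c : K) :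
    SuperadditiveThreshold fun _ k : ℕ => (k : K) * a / c := by
  intro _ k l
  simp only [Nat.cast_add, add_mul, add_div, le_refl]

variable [IsOrderedAddMonoid M] {x : ℕ → M} {T : ℕ → ℕ → M} {i l s : ℕ}

theorem ChainViable.append (hT : SuperadditiveThreshold T) (hs : ChainViable x T i s)
    (hl : ChainViable x T (i + s) l) : ChainViable x T i (s + l) :=
  calc ∑ j ∈ Finset.range (s + l), x (i + j)
      = ∑ j ∈ Finset.range s, x (i + j) + ∑ j ∈ Finset.range l, x (i + s + j) := by
        simp only [Finset.sum_range_add, add_assoc]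
    _ ≤ T i s + T (i + s) l := add_le_add hs hl
    _ ≤ T i (s + l) := hT i s l

theorem PrefixViable.not_chainViable_suffix (hT : SuperadditiveThreshold T)
    (hpre : PrefixViable x T i (l - 1)) (hfail : ¬ ChainViable x T i l) (hs : s < l) :
    ¬ ChainViable x T (i + s) (l - s) := by
  intro hsuffix
  obtain rfl | hs_pos := s.eq_zero_or_pos
  · exact hfail hsuffix
  · have happend := (hpre s hs_pos (Nat.le_sub_one_of_lt hs)).append hT hsuffix
    rw [Nat.add_sub_cancel' hs.le] at happend
    exact hfail happend

theorem pigeonring_skipping_general (hT : SuperadditiveThreshold T)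
    (hpre : PrefixViable x T i (l - 1)) (hfail : ¬ ChainViable x T i l) :
    (∀ s < l, ¬ ChainViable x T (i + s) (l - s)) ∧
      ∀ s L, s < l → l ≤ s + L → ¬ PrefixViable x T (i + s) L := by
  have hsuffix : ∀ s < l, ¬ ChainViable x T (i + s) (l - s) := fun _ hs =>
    hpre.not_chainViable_suffix hT hfail hs
  exact ⟨hsuffix, fun s L hs hL hprefix =>
    hsuffix s hs (hprefix (l - s) (Nat.sub_pos_of_lt hs) (Nat.sub_le_iff_le_add'.2 hL))⟩

end Chains

/-- Skipping optimization: if the chain starting at `i` fails the prefix-viable check exactly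
at length `l'` (every proper prefix is viable but the length-`l'` prefix is not), then for
every `s ∈ [1, l' - 1]` the chain of length `l' - s` starting at `i + s` is not viable;
consequently, no chain starting at a position `i + s` with `s ≤ l' - 1`, long enough to reach
position `i + l' - 1`, is prefix-viable. -/
theorem pigeonring_skipping (m : ℕ) (hm : 1 ≤ m) (b : ℕ → ℝ) (n : ℝ)
    (i l' : ℕ) (hl'1 : 1 ≤ l') (hl'm : l' ≤ m)
    (hpre : ∀ k, 1 ≤ k → k ≤ l' - 1 →
      ∑ j ∈ Finset.range k, b ((i + j) % m) ≤ (k : ℝ) * n / m)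
    (hfail : (l' : ℝ) * n / m < ∑ j ∈ Finset.range l', b ((i + j) % m)) :
    (∀ s, 1 ≤ s → s ≤ l' - 1 →
      ((l' - s : ℕ) : ℝ) * n / m < ∑ j ∈ Finset.range (l' - s), b ((i + s + j) % m)) ∧
    (∀ s L, s ≤ l' - 1 → l' ≤ s + L →
      ¬ (∀ k, 1 ≤ k → k ≤ L →
        ∑ j ∈ Finset.range k, b ((i + s + j) % m) ≤ (k : ℝ) * n / m)) := by
  obtain ⟨hsuffix, hskip⟩ := pigeonring_skipping_general (x := fun j => b (j % m))
    (superadditiveThreshold_mul_div n (m : ℝ)) hpre hfail.not_ge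
  exact ⟨fun s _ hs => not_le.1 (hsuffix s (Nat.lt_of_le_sub_one hl'1 hs)),
    fun s L hs => hskip s L (Nat.lt_of_le_sub_one hl'1 hs)⟩
end

section
/- Let b : ℝ → ℝ be a periodic function with period m (i.e., b(x + m) = b(x) for all x ∈ ℝ), where m is a positive real number, and suppose b is integrable on every bounded interval. Let u and n be real numbers. If ∫_u^{u+m} b(x) dx ≤ n, then there exists x₁ ∈ [u, u+m] such that for all x₂ ∈ [x₁, x₁+m], ∫_{x₁}^{x₂} b(x) dx ≤ (x₂ − x₁)·n/m. -/
open MeasureTheory intervalIntegral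

/-!
Subtracting the mean slope `n / m` from `b` gives a function `f` whose integral over every window
of length `m` is nonpositive, so that its primitive `F` satisfies `F (x + m) ≤ F x`. The maximum
of `F` on `[u, u + m]` is therefore its maximum on `[u, ∞)`, and any point `x₁` attaining it works:
`∫_{x₁}^{x₂} f = F x₂ - F x₁ ≤ 0`.
-/

section MapAddLe

variable {G α : Type*} [AddCommGroup G] [LinearOrder G] [IsOrderedAddMonoid G]
  {g : G → α} {u m : G}

lemma map_add_nsmul_le_of_map_add_le [Preorder α] (hm : 0 ≤ m)
    (hg : ∀ x, u ≤ x → g (x + m) ≤ g x) {x : G} (hx : u ≤ x) (k : ℕ) :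
    g (x + k • m) ≤ g x := by
  induction k with
  | zero => rw [zero_nsmul, add_zero]
  | succ k ih =>
    calc g (x + (k + 1) • m) = g (x + k • m + m) := by rw [succ_nsmul, add_assoc]
      _ ≤ g (x + k • m) := hg _ (le_add_of_le_of_nonneg hx (nsmul_nonneg hm k))
      _ ≤ g x := ih

lemma exists_nat_add_nsmul_eq_of_le [Archimedean G] (hm : 0 < m) {y : G} (hy : u ≤ y) :
    ∃ x ∈ Set.Ico u (u + m), ∃ k : ℕ, x + k • m = y := by
  have hlt : y < u + (m + toIcoDiv hm u y • m) := by
    rw [← add_assoc, ← sub_lt_iff_lt_add]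
    exact (sub_toIcoDiv_zsmul_mem_Ico hm u y).2
  have hpos : 0 < (toIcoDiv hm u y + 1) • m := by
    rw [add_zsmul, one_zsmul, add_comm]
    exact pos_of_lt_add_right (hy.trans_lt hlt)
  have hdiv : 0 ≤ toIcoDiv hm u y := Int.lt_add_one_iff.1 (pos_of_smul_pos_right hpos hm.le)
  obtain ⟨k, hk⟩ := Int.eq_ofNat_of_zero_le hdiv
  refine ⟨toIcoMod hm u y, toIcoMod_mem_Ico hm u y, k, ?_⟩
  rw [← natCast_zsmul, ← hk, toIcoMod_add_toIcoDiv_zsmul]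

lemma exists_isMaxOn_Ici_of_map_add_le [Archimedean G] [TopologicalSpace G] [CompactIccSpace G]
    [LinearOrder α] [TopologicalSpace α] [ClosedIciTopology α] (hm : 0 < m)
    (hcont : ContinuousOn g (Set.Icc u (u + m))) (hg : ∀ x, u ≤ x → g (x + m) ≤ g x) :
    ∃ x₁ ∈ Set.Icc u (u + m), IsMaxOn g (Set.Ici u) x₁ := by
  obtain ⟨x₁, hx₁, hmax⟩ := isCompact_Icc.exists_isMaxOn
    (Set.nonempty_Icc.2 (le_add_of_nonneg_right hm.le)) hcont
  refine ⟨x₁, hx₁, fun y hy => ?_⟩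
  obtain ⟨x, hx, k, rfl⟩ := exists_nat_add_nsmul_eq_of_le hm hy
  exact (map_add_nsmul_le_of_map_add_le hm.le hg hx.1 k).trans (hmax (Set.Ico_subset_Icc_self hx))

end MapAddLe

lemma exists_forall_integral_nonpos_of_integral_add_nonpos {μ : Measure ℝ} [NullSingletonClass μ]
    {f : ℝ → ℝ} {u m : ℝ} (hm : 0 < m)
    (hint : ∀ c, u ≤ c → IntervalIntegrable f μ u c)
    (hf : ∀ x, u ≤ x → ∫ t in x..(x + m), f t ∂μ ≤ 0) :
    ∃ x₁ ∈ Set.Icc u (u + m), ∀ x₂, x₁ ≤ x₂ → ∫ t in x₁..x₂, f t ∂μ ≤ 0 := by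
  have hum : u ≤ u + m := le_add_of_nonneg_right hm.le
  have hcont : ContinuousOn (fun x => ∫ t in u..x, f t ∂μ) (Set.Icc u (u + m)) := by
    rw [← Set.uIcc_of_le hum]
    exact continuousOn_primitive_interval' (hint _ hum) Set.left_mem_uIcc
  have hwindow : ∀ x, u ≤ x → ∫ t in u..(x + m), f t ∂μ ≤ ∫ t in u..x, f t ∂μ := by
    intro x hx
    have hxm : u ≤ x + m := le_add_of_le_of_nonneg hx hm.le
    rw [← sub_nonpos, integral_interval_sub_left (hint _ hxm) (hint _ hx)]
    exact hf x hx
  obtain ⟨x₁, hx₁, hmax⟩ := exists_isMaxOn_Ici_of_map_add_le hm hcont hwindow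
  refine ⟨x₁, hx₁, fun x₂ hx₂ => ?_⟩
  have hux₂ : u ≤ x₂ := hx₁.1.trans hx₂
  rw [← integral_interval_sub_left (hint _ hux₂) (hint _ hx₁.1), sub_nonpos]
  exact hmax hux₂

theorem pigeonring_integral_general {b : ℝ → ℝ} {u n m : ℝ} (hm : 0 < m)
    (hint : ∀ c, u ≤ c → IntervalIntegrable b volume u c)
    (h : ∀ x, u ≤ x → ∫ t in x..(x + m), b t ≤ n) :
    ∃ x₁ ∈ Set.Icc u (u + m), ∀ x₂, x₁ ≤ x₂ → ∫ t in x₁..x₂, b t ≤ (x₂ - x₁) * n / m := by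
  have integral_sub_slope : ∀ x y, u ≤ x → u ≤ y →
      ∫ t in x..y, (b t - n / m) = (∫ t in x..y, b t) - (y - x) * n / m := by
    intro x y hx hy
    rw [integral_sub ((hint x hx).symm.trans (hint y hy)) intervalIntegrable_const,
      intervalIntegral.integral_const, smul_eq_mul, mul_div_assoc]
  have hwindow : ∀ x, u ≤ x → ∫ t in x..(x + m), (b t - n / m) ≤ 0 := by
    intro x hx
    rw [integral_sub_slope x _ hx (le_add_of_le_of_nonneg hx hm.le), add_sub_cancel_left,
      mul_div_cancel_left₀ n hm.ne', sub_nonpos]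
    exact h x hx
  obtain ⟨x₁, hx₁, hnonpos⟩ := exists_forall_integral_nonpos_of_integral_add_nonpos hm
    (fun c hc => (hint c hc).sub intervalIntegrable_const) hwindow
  refine ⟨x₁, hx₁, fun x₂ hx₂ => ?_⟩
  rw [← sub_nonpos, ← integral_sub_slope x₁ x₂ hx₁.1 (hx₁.1.trans hx₂)]
  exact hnonpos x₂ hx₂

/-- Integral (continuous) form of the pigeonring principle: if `b` is periodic with period
`m > 0`, integrable on every bounded interval, and `∫_u^{u+m} b ≤ n`, then there exists
`x₁ ∈ [u, u + m]` such that for all `x₂ ∈ [x₁, x₁ + m]`,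
`∫_{x₁}^{x₂} b ≤ (x₂ - x₁) * n / m`. -/
theorem pigeonring_integral (b : ℝ → ℝ) (u n m : ℝ) (hm : 0 < m)
    (hper : ∀ x : ℝ, b (x + m) = b x)
    (hint : ∀ a c : ℝ, IntervalIntegrable b volume a c)
    (h : (∫ x in u..(u + m), b x) ≤ n) :
    ∃ x₁ ∈ Set.Icc u (u + m), ∀ x₂ ∈ Set.Icc x₁ (x₁ + m),
      (∫ x in x₁..x₂, b x) ≤ (x₂ - x₁) * n / m := by
  obtain ⟨x₁, hx₁, hle⟩ := pigeonring_integral_general hm (fun c _ => hint u c)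
    fun x _ => (Function.Periodic.intervalIntegral_add_eq hper x u).trans_le h
  exact ⟨x₁, hx₁, fun x₂ hx₂ => hle x₂ hx₂.1⟩
end
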